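/- arXiv:2304.01270 — 2 statements merged into one kernel-verified Lean document; each statement's English description precedes it below -/
import Mathlib

section
/- For qubits, ergotropy is additive on tensor powers: if ρ is a 2×2 density matrix and h a Hermitian 2×2 matrix, then for every N ≥ 1, ℰ(ρ^{⊗N}; h^{(N)}) = N · ℰ(ρ; h). In particular the total ergotropy of a qubit state equals its ergotropy. -/
/-!
Call a state passive if no unitary lowers its energy. If `(ρ, h)` is passive, then the ergotropy of
`VρV†` with respect to `WhW†` is its energy minus the energy of `ρ` with respect to `h`. Every pair
has this form: take `ρ = diag(p)` with decreasing populations and `h = diag(E)` with increasing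
energies. Indeed oppositely ordered diagonal matrices form a passive pair, because the energy of
`U diag(p) U†` is linear in the doubly stochastic matrix `|U f g|²`, and by Birkhoff's theorem and
the rearrangement inequality it is smallest at the identity.

On `N` sites `diag(p)^{⊗N}` and `diag(E)^{(N)}` have the spectra `∏ i, p (f i)` and `∑ i, E (f i)`.
Up to a permutation of the sites, which changes neither value, any two configurations
`f g : Fin N → Fin 2` are comparable pointwise. This fails for more than two levels; for qubits it
makes the spectra oppositely ordered again, so tensor powers of a passive qubit state are passive.
Additivity follows because `Tr[σ^{⊗N} k^{(N)}] = N Tr[σ k]` whenever `Tr σ = 1`, which applies to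
both energies in the ergotropy.
-/

open Matrix Filter Topology
open scoped ComplexOrder Kronecker

noncomputable section

/-- A density matrix: positive semidefinite with unit trace. -/
def IsDensity {n : Type*} [Fintype n] [DecidableEq n] (ρ : Matrix n n ℂ) : Prop :=
  ρ.PosSemidef ∧ ρ.trace = 1

/-- The ergotropy `ℰ(ρ;H) = ⨆_{U ∈ U(d)} (re Tr[ρH] − re Tr[U ρ U† H])`. -/
def ergo {n : Type*} [Fintype n] [DecidableEq n] (ρ H : Matrix n n ℂ) : ℝ :=
  ⨆ U : Matrix.unitaryGroup n ℂ,
    ((ρ * H).trace.re -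
      ((U : Matrix n n ℂ) * ρ * star (U : Matrix n n ℂ) * H).trace.re)

/-- `N`-fold tensor power of a `d × d` matrix:
`ρ^{⊗N} f g = ∏_{i<N} ρ (f i) (g i)`. -/
def tpow {d : ℕ} (ρ : Matrix (Fin d) (Fin d) ℂ) (N : ℕ) :
    Matrix (Fin N → Fin d) (Fin N → Fin d) ℂ :=
  Matrix.of fun f g => ∏ i, ρ (f i) (g i)

/-- Tensor product `ρ₁ ⊗ ⋯ ⊗ ρₙ` of `n` single-site matrices. -/
def prodMat {d n : ℕ} (ρs : Fin n → Matrix (Fin d) (Fin d) ℂ) :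
    Matrix (Fin n → Fin d) (Fin n → Fin d) ℂ :=
  Matrix.of fun f g => ∏ i, ρs i (f i) (g i)

/-- Noninteracting `N`-site Hamiltonian:
`h^{(N)} f g = Σ_{i<N} h (f i) (g i) · ∏_{j≠i} (if f j = g j then 1 else 0)`. -/
def hSum {d : ℕ} (h : Matrix (Fin d) (Fin d) ℂ) (N : ℕ) :
    Matrix (Fin N → Fin d) (Fin N → Fin d) ℂ :=
  Matrix.of fun f g =>
    ∑ i, h (f i) (g i) * ∏ j ∈ Finset.univ.erase i, (if f j = g j then (1:ℂ) else 0)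

/-- The ampliation `Λ ⊗ id_k` of a linear map on `d × d` matrices. -/
def Ampliation {d : ℕ} (Λ : Matrix (Fin d) (Fin d) ℂ →ₗ[ℂ] Matrix (Fin d) (Fin d) ℂ)
    (k : ℕ) (M : Matrix (Fin d × Fin k) (Fin d × Fin k) ℂ) :
    Matrix (Fin d × Fin k) (Fin d × Fin k) ℂ :=
  Matrix.of fun p q => Λ (Matrix.of fun i' j' => M (i', p.2) (j', q.2)) p.1 q.1

/-- A quantum channel: a ℂ-linear, trace-preserving, completely positive map. -/
def IsChannel {d : ℕ} (Λ : Matrix (Fin d) (Fin d) ℂ →ₗ[ℂ] Matrix (Fin d) (Fin d) ℂ) : Prop :=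
  (∀ M, (Λ M).trace = M.trace) ∧
  ∀ k : ℕ, ∀ M : Matrix (Fin d × Fin k) (Fin d × Fin k) ℂ,
    M.PosSemidef → (Ampliation Λ k M).PosSemidef

/-- Local ergotropy of an `n`-site state: the supremum is restricted to
product unitaries `U₁ ⊗ ⋯ ⊗ Uₙ`. -/
def locErgo {d n : ℕ} (σ H : Matrix (Fin n → Fin d) (Fin n → Fin d) ℂ) : ℝ :=
  ⨆ U : Fin n → Matrix.unitaryGroup (Fin d) ℂ,
    ((σ * H).trace.re -
      ((prodMat fun i => (U i : Matrix (Fin d) (Fin d) ℂ)) * σ *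
        star (prodMat fun i => (U i : Matrix (Fin d) (Fin d) ℂ)) * H).trace.re)

/-- Von Neumann entropy `S(σ) = Σ_i −λ_i log λ_i` of a Hermitian matrix. -/
def vnEntropy {n : Type*} [Fintype n] [DecidableEq n]
    {σ : Matrix n n ℂ} (hσ : σ.IsHermitian) : ℝ :=
  ∑ i, Real.negMulLog (hσ.eigenvalues i)

/-- `i`-th single-site reduced density matrix of an `n`-site state. -/
def red {d n : ℕ} (ρ : Matrix (Fin n → Fin d) (Fin n → Fin d) ℂ) (i : Fin n) :
    Matrix (Fin d) (Fin d) ℂ :=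
  Matrix.of fun a b =>
    ∑ f ∈ Finset.univ.filter (fun f : Fin n → Fin d => f i = a), ρ f (Function.update f i b)

/-- Separability: `ρ` is a convex combination of product density matrices. -/
def SepState {d n : ℕ} (ρ : Matrix (Fin n → Fin d) (Fin n → Fin d) ℂ) : Prop :=
  ∃ (m : ℕ) (p : Fin m → ℝ) (σs : Fin m → Fin n → Matrix (Fin d) (Fin d) ℂ),
    (∀ k, 0 ≤ p k) ∧ (∑ k, p k = 1) ∧ (∀ k i, IsDensity (σs k i)) ∧
    ρ = ∑ k, (p k : ℂ) • prodMat (σs k)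

/-- Total ergotropy `ℰ_tot(σ;h) = ⨆_{N≥1} ℰ(σ^{⊗N}; h^{(N)})/N`. -/
def Etot {d : ℕ} (σ h : Matrix (Fin d) (Fin d) ℂ) : ℝ :=
  ⨆ N : ℕ+, ergo (tpow σ (N:ℕ)) (hSum h (N:ℕ)) / (N:ℕ)

/-- Largest eigenvalue of a Hermitian matrix. -/
def lamMax {d : ℕ} {h : Matrix (Fin d) (Fin d) ℂ} (hh : h.IsHermitian) : ℝ :=
  ⨆ i, hh.eigenvalues i

/-- Single-shot energy-constrained maximal output ergotropy `ℰ^{(1)}(Λ;e)`. -/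
def E1 {d : ℕ} (Λ : Matrix (Fin d) (Fin d) ℂ →ₗ[ℂ] Matrix (Fin d) (Fin d) ℂ)
    (h : Matrix (Fin d) (Fin d) ℂ) (e : ℝ) : ℝ :=
  sSup {x | ∃ ρ : Matrix (Fin d) (Fin d) ℂ,
    IsDensity ρ ∧ (ρ * h).trace.re ≤ e ∧ x = ergo (Λ ρ) h}

/-- Single-shot energy-constrained maximal output total ergotropy `ℰ_tot^{(1)}(Λ;e)`. -/
def E1tot {d : ℕ} (Λ : Matrix (Fin d) (Fin d) ℂ →ₗ[ℂ] Matrix (Fin d) (Fin d) ℂ)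
    (h : Matrix (Fin d) (Fin d) ℂ) (e : ℝ) : ℝ :=
  sSup {x | ∃ ρ : Matrix (Fin d) (Fin d) ℂ,
    IsDensity ρ ∧ (ρ * h).trace.re ≤ e ∧ x = Etot (Λ ρ) h}

/-- `χ(Λ;e)`: supremum of `Σ_j p_j ℰ^{(1)}(Λ;e_j)` over finite probability vectors
`(p_j)` and energies `e_j ∈ [0, lmax]` with `Σ_j p_j e_j ≤ e`. -/
def chi {d : ℕ} (Λ : Matrix (Fin d) (Fin d) ℂ →ₗ[ℂ] Matrix (Fin d) (Fin d) ℂ)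
    (h : Matrix (Fin d) (Fin d) ℂ) (lmax e : ℝ) : ℝ :=
  sSup {x | ∃ (m : ℕ) (p ev : Fin m → ℝ),
    (∀ j, 0 ≤ p j) ∧ (∑ j, p j = 1) ∧ (∀ j, ev j ∈ Set.Icc (0:ℝ) lmax) ∧
    (∑ j, p j * ev j ≤ e) ∧ x = ∑ j, p j * E1 Λ h (ev j)}

/-- `χ_tot(Λ;e)`: as `χ` but with the total ergotropy. -/
def chiTot {d : ℕ} (Λ : Matrix (Fin d) (Fin d) ℂ →ₗ[ℂ] Matrix (Fin d) (Fin d) ℂ)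
    (h : Matrix (Fin d) (Fin d) ℂ) (lmax e : ℝ) : ℝ :=
  sSup {x | ∃ (m : ℕ) (p ev : Fin m → ℝ),
    (∀ j, 0 ≤ p j) ∧ (∑ j, p j = 1) ∧ (∀ j, ev j ∈ Set.Icc (0:ℝ) lmax) ∧
    (∑ j, p j * ev j ≤ e) ∧ x = ∑ j, p j * E1tot Λ h (ev j)}

/-- `ℰ_loc^{(n)}(Λ;E)`. -/
def ElocN {d : ℕ}
    (Λfam : ∀ n : ℕ, Matrix (Fin n → Fin d) (Fin n → Fin d) ℂ →ₗ[ℂ]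
      Matrix (Fin n → Fin d) (Fin n → Fin d) ℂ)
    (h : Matrix (Fin d) (Fin d) ℂ) (n : ℕ) (E : ℝ) : ℝ :=
  sSup {x | ∃ ρ : Matrix (Fin n → Fin d) (Fin n → Fin d) ℂ,
    IsDensity ρ ∧ (ρ * hSum h n).trace.re ≤ E ∧ x = locErgo (Λfam n ρ) (hSum h n)}

/-- `ℰ_{loc,sep}^{(n)}(Λ;E)`. -/
def ElocSepN {d : ℕ}
    (Λfam : ∀ n : ℕ, Matrix (Fin n → Fin d) (Fin n → Fin d) ℂ →ₗ[ℂ]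
      Matrix (Fin n → Fin d) (Fin n → Fin d) ℂ)
    (h : Matrix (Fin d) (Fin d) ℂ) (n : ℕ) (E : ℝ) : ℝ :=
  sSup {x | ∃ ρ : Matrix (Fin n → Fin d) (Fin n → Fin d) ℂ,
    IsDensity ρ ∧ SepState ρ ∧ (ρ * hSum h n).trace.re ≤ E ∧
    x = locErgo (Λfam n ρ) (hSum h n)}

/-- `ℰ_sep^{(n)}(Λ;E)`. -/
def EsepN {d : ℕ}
    (Λfam : ∀ n : ℕ, Matrix (Fin n → Fin d) (Fin n → Fin d) ℂ →ₗ[ℂ]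
      Matrix (Fin n → Fin d) (Fin n → Fin d) ℂ)
    (h : Matrix (Fin d) (Fin d) ℂ) (n : ℕ) (E : ℝ) : ℝ :=
  sSup {x | ∃ ρ : Matrix (Fin n → Fin d) (Fin n → Fin d) ℂ,
    IsDensity ρ ∧ SepState ρ ∧ (ρ * hSum h n).trace.re ≤ E ∧
    x = ergo (Λfam n ρ) (hSum h n)}

open Unitary

section Rearrangement

variable {n : Type*} [Fintype n] [DecidableEq n]

lemma dotProduct_le_mulVec_dotProduct_of_mem_doublyStochastic {R : Type*} [Field R] [LinearOrder R]
    [IsStrictOrderedRing R] {p E : n → R} (hpE : Antivary p E) {M : Matrix n n R}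
    (hM : M ∈ doublyStochastic R n) : p ⬝ᵥ E ≤ (M *ᵥ p) ⬝ᵥ E := by
  obtain ⟨w, hw_nonneg, hw_sum, rfl⟩ := exists_eq_sum_perm_of_mem_doublyStochastic hM
  calc p ⬝ᵥ E = ∑ σ, w σ * (p ⬝ᵥ E) := by rw [← Finset.sum_mul, hw_sum, one_mul]
    _ ≤ ∑ σ : Equiv.Perm n, w σ * ((p ∘ σ) ⬝ᵥ E) :=
      Finset.sum_le_sum fun σ _ =>
        mul_le_mul_of_nonneg_left hpE.sum_mul_le_sum_comp_perm_mul (hw_nonneg σ)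
    _ = ((∑ σ, w σ • σ.permMatrix R) *ᵥ p) ⬝ᵥ E := by
      simp only [Matrix.sum_mulVec, Matrix.smul_mulVec, Matrix.permMatrix_mulVec,
        sum_dotProduct, smul_dotProduct, smul_eq_mul]

lemma sum_norm_sq_row_of_mem_unitaryGroup {𝕜 : Type*} [RCLike 𝕜] {U : Matrix n n 𝕜}
    (hU : U ∈ unitaryGroup n 𝕜) (i : n) : ∑ j, ‖U i j‖ ^ 2 = 1 := by
  have hdiag : (U * star U) i i = 1 := by rw [mem_unitaryGroup_iff.1 hU, one_apply_eq]
  simp only [mul_apply, star_apply, RCLike.star_def, RCLike.mul_conj] at hdiag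
  exact_mod_cast hdiag

lemma map_norm_sq_mem_doublyStochastic {𝕜 : Type*} [RCLike 𝕜] {U : Matrix n n 𝕜}
    (hU : U ∈ unitaryGroup n 𝕜) : U.map (‖·‖ ^ 2) ∈ doublyStochastic ℝ n := by
  refine mem_doublyStochastic_iff_sum.2 ⟨fun i j => sq_nonneg ‖U i j‖,
    sum_norm_sq_row_of_mem_unitaryGroup hU, fun j => ?_⟩
  simpa only [star_apply, norm_star] using!
    sum_norm_sq_row_of_mem_unitaryGroup (Unitary.star_mem hU) j

end Rearrangement

section Passivity

variable {n : Type*} [Fintype n] [DecidableEq n]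

/-- The state `ρ` is passive for the Hamiltonian `H`: no unitary lowers its energy `re Tr[ρH]`, so
no work can be extracted from it. Positivity of `ρ` and Hermiticity of `H` are not built in. -/
def IsPassive (ρ H : Matrix n n ℂ) : Prop :=
  ∀ U : unitaryGroup n ℂ, (ρ * H).trace.re ≤ (conjStarAlgAut ℂ _ U ρ * H).trace.re

lemma trace_conjStarAlgAut (U : unitaryGroup n ℂ) (A : Matrix n n ℂ) :
    (conjStarAlgAut ℂ _ U A).trace = A.trace := by
  rw [conjStarAlgAut_apply, trace_mul_cycle, coe_star_mul_self, one_mul]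

lemma trace_conjStarAlgAut_mul_conjStarAlgAut (V W : unitaryGroup n ℂ) (A B : Matrix n n ℂ) :
    (conjStarAlgAut ℂ _ V A * conjStarAlgAut ℂ _ W B).trace =
      (conjStarAlgAut ℂ _ (W⁻¹ * V) A * B).trace := by
  rw [← trace_conjStarAlgAut W (conjStarAlgAut ℂ _ (W⁻¹ * V) A * B), map_mul,
    ← conjStarAlgAut_mul_apply, mul_inv_cancel_left]

lemma IsPassive.ergo_conjStarAlgAut {ρ H : Matrix n n ℂ} (hρ : IsPassive ρ H)
    (V W : unitaryGroup n ℂ) :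
    ergo (conjStarAlgAut ℂ _ V ρ) (conjStarAlgAut ℂ _ W H) =
      (conjStarAlgAut ℂ _ V ρ * conjStarAlgAut ℂ _ W H).trace.re - (ρ * H).trace.re := by
  have energy_rotated (U : unitaryGroup n ℂ) :
      (U * conjStarAlgAut ℂ _ V ρ * star (U : Matrix n n ℂ) * conjStarAlgAut ℂ _ W H).trace =
        (conjStarAlgAut ℂ _ (W⁻¹ * (U * V)) ρ * H).trace := by
    rw [← trace_conjStarAlgAut_mul_conjStarAlgAut, conjStarAlgAut_mul_apply,
      conjStarAlgAut_apply U]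
  refine IsGreatest.csSup_eq ⟨⟨W * V⁻¹, ?_⟩, Set.forall_mem_range.2 fun U => ?_⟩
  · simp only [energy_rotated, inv_mul_cancel_right, inv_mul_cancel, map_one,
      StarAlgEquiv.one_apply]
  · rw [energy_rotated]
    exact sub_le_sub_left (hρ _) _

lemma conjStarAlgAut_diagonal_ofReal_apply_self (U : unitaryGroup n ℂ) (p : n → ℝ) (i : n) :
    conjStarAlgAut ℂ _ U (diagonal (Complex.ofReal ∘ p)) i i =
      (((U : Matrix n n ℂ).map (‖·‖ ^ 2) *ᵥ p) i : ℝ) := by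
  rw [conjStarAlgAut_apply, mul_apply, mulVec, dotProduct, Complex.ofReal_sum]
  refine Finset.sum_congr rfl fun j _ => ?_
  rw [mul_diagonal, star_apply, mul_right_comm, RCLike.star_def, Complex.mul_conj', map_apply,
    Function.comp_apply, Complex.ofReal_mul, Complex.ofReal_pow]

lemma re_trace_conjStarAlgAut_diagonal_mul_diagonal (U : unitaryGroup n ℂ) (p E : n → ℝ) :
    (conjStarAlgAut ℂ _ U (diagonal (Complex.ofReal ∘ p)) *
      diagonal (Complex.ofReal ∘ E)).trace.re =
      (((U : Matrix n n ℂ).map (‖·‖ ^ 2)) *ᵥ p) ⬝ᵥ E := by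
  simp only [trace, diag_apply, mul_diagonal, conjStarAlgAut_diagonal_ofReal_apply_self,
    Function.comp_apply, Complex.re_sum, ← Complex.ofReal_mul, Complex.ofReal_re, dotProduct]

lemma isPassive_diagonal_of_antivary {p E : n → ℝ} (hpE : Antivary p E) :
    IsPassive (diagonal (Complex.ofReal ∘ p)) (diagonal (Complex.ofReal ∘ E)) := by
  intro U
  have energy_diagonal : (diagonal (Complex.ofReal ∘ p) * diagonal (Complex.ofReal ∘ E)).trace.re =
      p ⬝ᵥ E := by
    simp only [diagonal_mul_diagonal, trace_diagonal, Function.comp_apply, ← Complex.ofReal_mul,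
      Complex.re_sum, Complex.ofReal_re, dotProduct]
  rw [energy_diagonal, re_trace_conjStarAlgAut_diagonal_mul_diagonal]
  exact dotProduct_le_mulVec_dotProduct_of_mem_doublyStochastic hpE
    (map_norm_sq_mem_doublyStochastic U.2)

end Passivity

section TensorPower

variable {d : ℕ} {N : ℕ}

lemma prodMat_mul_prodMat (A B : Fin N → Matrix (Fin d) (Fin d) ℂ) :
    prodMat A * prodMat B = prodMat fun i => A i * B i := by
  ext f g
  simp only [prodMat, mul_apply, of_apply, Fintype.prod_sum, ← Finset.prod_mul_distrib]

lemma trace_prodMat (A : Fin N → Matrix (Fin d) (Fin d) ℂ) :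
    (prodMat A).trace = ∏ i, (A i).trace := by
  simp only [prodMat, trace, diag_apply, of_apply, Fintype.prod_sum]

lemma star_prodMat (A : Fin N → Matrix (Fin d) (Fin d) ℂ) :
    star (prodMat A) = prodMat fun i => star (A i) := by
  ext f g
  simp only [prodMat, star_apply, of_apply, star_prod]

lemma prodMat_diagonal (a : Fin N → Fin d → ℂ) :
    (prodMat fun i => diagonal (a i)) = diagonal fun f => ∏ i, a i (f i) := by
  ext f g
  obtain rfl | hfg := eq_or_ne f g
  · simp only [prodMat, of_apply, diagonal_apply_eq]
  · obtain ⟨i, hi⟩ := Function.ne_iff.1 hfg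
    rw [diagonal_apply_ne _ hfg]
    exact Finset.prod_eq_zero (Finset.mem_univ i) (diagonal_apply_ne _ hi)

lemma prodMat_one : (prodMat fun _ => 1 : Matrix (Fin N → Fin d) (Fin N → Fin d) ℂ) = 1 := by
  simp only [← diagonal_one, prodMat_diagonal, Finset.prod_const_one]

lemma hSum_eq_sum_prodMat (h : Matrix (Fin d) (Fin d) ℂ) :
    hSum h N = ∑ i, prodMat (Pi.mulSingle i h) := by
  ext f g
  simp only [hSum, of_apply, Matrix.sum_apply, prodMat]
  refine Finset.sum_congr rfl fun i _ => ?_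
  rw [← Finset.mul_prod_erase _ _ (Finset.mem_univ i), Pi.mulSingle_eq_same]
  congr 1
  refine Finset.prod_congr rfl fun j hj => ?_
  rw [Pi.mulSingle_eq_of_ne (Finset.ne_of_mem_erase hj), one_apply]

/-- The product unitary `V₁ ⊗ ⋯ ⊗ V_N`, which acts on each of the `N` sites separately. -/
def prodUnitary (V : Fin N → unitaryGroup (Fin d) ℂ) : unitaryGroup (Fin N → Fin d) ℂ :=
  ⟨prodMat fun i => V i, mem_unitaryGroup_iff.2 <| by
    rw [star_prodMat, prodMat_mul_prodMat, ← prodMat_one]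
    exact congrArg prodMat (funext fun i => mem_unitaryGroup_iff.1 (V i).2)⟩

lemma conjStarAlgAut_prodUnitary_prodMat (V : Fin N → unitaryGroup (Fin d) ℂ)
    (A : Fin N → Matrix (Fin d) (Fin d) ℂ) :
    conjStarAlgAut ℂ _ (prodUnitary V) (prodMat A) =
      prodMat fun i => conjStarAlgAut ℂ _ (V i) (A i) := by
  simp only [prodUnitary, conjStarAlgAut_apply, star_prodMat, prodMat_mul_prodMat]

lemma tpow_conjStarAlgAut (V : unitaryGroup (Fin d) ℂ) (A : Matrix (Fin d) (Fin d) ℂ) :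
    tpow (conjStarAlgAut ℂ _ V A) N = conjStarAlgAut ℂ _ (prodUnitary fun _ => V) (tpow A N) :=
  (conjStarAlgAut_prodUnitary_prodMat (fun _ => V) fun _ => A).symm

lemma hSum_conjStarAlgAut (V : unitaryGroup (Fin d) ℂ) (h : Matrix (Fin d) (Fin d) ℂ) :
    hSum (conjStarAlgAut ℂ _ V h) N = conjStarAlgAut ℂ _ (prodUnitary fun _ => V) (hSum h N) := by
  simp only [hSum_eq_sum_prodMat, map_sum, conjStarAlgAut_prodUnitary_prodMat]
  congr! 2 with i
  exact Pi.mulSingle_op (fun _ => conjStarAlgAut ℂ _ V) (fun _ => map_one _) i h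

lemma tpow_diagonal (p : Fin d → ℝ) :
    tpow (diagonal (Complex.ofReal ∘ p)) N =
      diagonal (Complex.ofReal ∘ fun f => ∏ i, p (f i)) := by
  refine (prodMat_diagonal fun _ => Complex.ofReal ∘ p).trans ?_
  simp only [Function.comp_def, Complex.ofReal_prod]

lemma hSum_diagonal (E : Fin d → ℝ) :
    hSum (diagonal (Complex.ofReal ∘ E)) N =
      diagonal (Complex.ofReal ∘ fun f => ∑ i, E (f i)) := by
  have prodMat_mulSingle (i : Fin N) : prodMat (Pi.mulSingle i (diagonal (Complex.ofReal ∘ E))) =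
      diagonal fun f => (E (f i) : ℂ) := by
    rw [Pi.mulSingle_op (fun _ => diagonal) (fun _ => diagonal_one),
      prodMat_diagonal]
    congr! with f
    rw [Fintype.prod_eq_single i fun j hj => by rw [Pi.mulSingle_eq_of_ne hj, Pi.one_apply],
      Pi.mulSingle_eq_same, Function.comp_apply]
  simp only [hSum_eq_sum_prodMat, prodMat_mulSingle]
  ext f g
  simp [Matrix.sum_apply, diagonal_apply]

-- The truncation of `N - 1` at `N = 0` is harmless, since the factor `N` vanishes there.
lemma trace_tpow_mul_hSum (A h : Matrix (Fin d) (Fin d) ℂ) :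
    (tpow A N * hSum h N).trace = N * ((A * h).trace * A.trace ^ (N - 1)) := by
  have trace_mulSingle (i : Fin N) : (tpow A N * prodMat (Pi.mulSingle i h)).trace =
      (A * h).trace * A.trace ^ (N - 1) := by
    change (prodMat _ * prodMat _).trace = _
    rw [prodMat_mul_prodMat, trace_prodMat, ← Finset.mul_prod_erase _ _ (Finset.mem_univ i),
      Pi.mulSingle_eq_same, Finset.prod_eq_pow_card (b := A.trace)]
    · simp
    · intro j hj
      rw [Pi.mulSingle_eq_of_ne (Finset.ne_of_mem_erase hj), mul_one]
  simp only [hSum_eq_sum_prodMat, Finset.mul_sum, trace_sum, trace_mulSingle, Finset.sum_const,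
    Finset.card_univ, Fintype.card_fin, nsmul_eq_mul]

lemma IsPassive.ergo_tpow_conjStarAlgAut {ρ h : Matrix (Fin d) (Fin d) ℂ} (hρ : ρ.trace = 1)
    (h_one : IsPassive ρ h) (h_pow : IsPassive (tpow ρ N) (hSum h N))
    (V W : unitaryGroup (Fin d) ℂ) :
    ergo (tpow (conjStarAlgAut ℂ _ V ρ) N) (hSum (conjStarAlgAut ℂ _ W h) N) =
      N * ergo (conjStarAlgAut ℂ _ V ρ) (conjStarAlgAut ℂ _ W h) := by
  have energy_tpow {σ : Matrix (Fin d) (Fin d) ℂ} (hσ : σ.trace = 1)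
      (k : Matrix (Fin d) (Fin d) ℂ) :
      (tpow σ N * hSum k N).trace.re = N * (σ * k).trace.re := by
    rw [trace_tpow_mul_hSum, hσ, one_pow, mul_one, ← nsmul_eq_mul, Complex.re_nsmul,
      nsmul_eq_mul]
  rw [h_one.ergo_conjStarAlgAut, mul_sub, ← energy_tpow hρ,
    ← energy_tpow (σ := conjStarAlgAut ℂ _ V ρ) (by rwa [trace_conjStarAlgAut]),
    tpow_conjStarAlgAut, hSum_conjStarAlgAut, h_pow.ergo_conjStarAlgAut]

end TensorPower

section Diagonalization

variable {𝕜 : Type*} [RCLike 𝕜] {n : Type*} [Fintype n] [DecidableEq n]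

lemma exists_eq_conjStarAlgAut_diagonal_eigenvalues_comp {A : Matrix n n 𝕜} (hA : A.IsHermitian)
    (σ : Equiv.Perm n) :
    ∃ V : unitaryGroup n 𝕜,
      A = conjStarAlgAut 𝕜 _ V (diagonal (RCLike.ofReal ∘ hA.eigenvalues ∘ σ)) := by
  let V : Matrix n n 𝕜 := hA.eigenvectorUnitary
  have hV : V.submatrix id σ ∈ unitaryGroup n 𝕜 := by
    rw [mem_unitaryGroup_iff, star_eq_conjTranspose, conjTranspose_submatrix, submatrix_mul_equiv,
      submatrix_id_id]
    exact mem_unitaryGroup_iff.1 hA.eigenvectorUnitary.2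
  refine ⟨⟨_, hV⟩, ?_⟩
  conv_lhs => rw [hA.spectral_theorem]
  rw [← Function.comp_assoc, ← submatrix_diagonal_equiv]
  simp only [conjStarAlgAut_apply, star_eq_conjTranspose, conjTranspose_submatrix,
    submatrix_mul_equiv, submatrix_id_id, V]

end Diagonalization

section Qubits

lemma exists_perm_forall_mem_of_card_le {ι : Type*} [Finite ι] {s t : Finset ι}
    (hst : s.card ≤ t.card) : ∃ e : Equiv.Perm ι, ∀ i ∈ s, e i ∈ t := by
  classical
  obtain ⟨u, hut, hu⟩ := Finset.exists_subset_card_eq hst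
  let e : {i // i ∈ s} ≃ {i // i ∈ u} := Finset.equivOfCardEq hu.symm
  exact ⟨e.extendSubtype, fun i hi => hut (e.extendSubtype_mem i hi)⟩

lemma exists_perm_le_comp_or_exists_perm_comp_le {ι : Type*} [Finite ι] (f g : ι → Fin 2) :
    (∃ e : Equiv.Perm ι, f ≤ g ∘ e) ∨ ∃ e : Equiv.Perm ι, g ≤ f ∘ e := by
  have := Fintype.ofFinite ι
  have exists_le_comp {f g : ι → Fin 2}
      (hfg : (Finset.univ.filter (f · = 1)).card ≤ (Finset.univ.filter (g · = 1)).card) :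
      ∃ e : Equiv.Perm ι, f ≤ g ∘ e := by
    obtain ⟨e, he⟩ := exists_perm_forall_mem_of_card_le hfg
    simp only [Finset.mem_filter_univ] at he
    refine ⟨e, fun i => ?_⟩
    obtain hfi | hfi : f i = 0 ∨ f i = 1 := by lia
    · exact hfi.trans_le (Fin.zero_le _)
    · exact (hfi.trans (he i hfi).symm).le
  exact (le_total _ _).imp exists_le_comp exists_le_comp

lemma antivary_prod_comp_sum_comp {ι : Type*} [Fintype ι] {p E : Fin 2 → ℝ} (hp_nonneg : 0 ≤ p)
    (hp : Antitone p) (hE : Monotone E) :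
    Antivary (fun f : ι → Fin 2 => ∏ i, p (f i)) fun f => ∑ i, E (f i) := by
  intro f g hfg
  obtain ⟨e, he⟩ | ⟨e, he⟩ := exists_perm_le_comp_or_exists_perm_comp_le f g
  · calc ∏ i, p (g i) = ∏ i, p (g (e i)) := (Equiv.prod_comp e fun i => p (g i)).symm
      _ ≤ ∏ i, p (f i) :=
        Finset.prod_le_prod (fun i _ => hp_nonneg _) fun i _ => hp (he i)
  · refine absurd hfg (not_lt.2 ?_)
    calc ∑ i, E (g i) ≤ ∑ i, E (f (e i)) := Finset.sum_le_sum fun i _ => hE (he i)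
      _ = ∑ i, E (f i) := Equiv.sum_comp e fun i => E (f i)

lemma isPassive_tpow_diagonal {p E : Fin 2 → ℝ} (hp_nonneg : 0 ≤ p) (hp : Antitone p)
    (hE : Monotone E) (N : ℕ) :
    IsPassive (tpow (diagonal (Complex.ofReal ∘ p)) N)
      (hSum (diagonal (Complex.ofReal ∘ E)) N) := by
  rw [tpow_diagonal, hSum_diagonal]
  exact isPassive_diagonal_of_antivary (antivary_prod_comp_sum_comp hp_nonneg hp hE)

theorem ergo_tpow_hSum {ρ h : Matrix (Fin 2) (Fin 2) ℂ} (hρ : IsDensity ρ) (hh : h.IsHermitian)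
    (N : ℕ) : ergo (tpow ρ N) (hSum h N) = N * ergo ρ h := by
  set r := hρ.1.isHermitian.eigenvalues
  set ε := hh.eigenvalues
  let p := r ∘ Tuple.sort (OrderDual.toDual ∘ r)
  let E := ε ∘ Tuple.sort ε
  obtain ⟨V, hV⟩ : ∃ V, ρ = conjStarAlgAut ℂ _ V (diagonal (Complex.ofReal ∘ p)) :=
    exists_eq_conjStarAlgAut_diagonal_eigenvalues_comp ..
  obtain ⟨W, hW⟩ : ∃ W, h = conjStarAlgAut ℂ _ W (diagonal (Complex.ofReal ∘ E)) :=
    exists_eq_conjStarAlgAut_diagonal_eigenvalues_comp ..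
  have hp : Antitone p := Tuple.monotone_sort (OrderDual.toDual ∘ r)
  have hE : Monotone E := Tuple.monotone_sort ε
  have hp_nonneg : 0 ≤ p := fun i => hρ.1.eigenvalues_nonneg _
  have htrace : (diagonal (Complex.ofReal ∘ p)).trace = 1 := by
    rw [← hρ.2, hV, trace_conjStarAlgAut]
  rw [hV, hW]
  exact (isPassive_diagonal_of_antivary (hp.antivary hE)).ergo_tpow_conjStarAlgAut htrace
    (isPassive_tpow_diagonal hp_nonneg hp hE N) V W

end Qubits

theorem statement5 (ρ h : Matrix (Fin 2) (Fin 2) ℂ)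
    (hρ : IsDensity ρ) (hh : h.IsHermitian) :
    (∀ N : ℕ, 1 ≤ N → ergo (tpow ρ N) (hSum h N) = N * ergo ρ h) ∧
    Etot ρ h = ergo ρ h := by
  refine ⟨fun N _ => ergo_tpow_hSum hρ hh N, ?_⟩
  have ergo_per_copy (N : ℕ+) : ergo (tpow ρ N) (hSum h N) / (N : ℕ) = ergo ρ h := by
    rw [ergo_tpow_hSum hρ hh, mul_div_cancel_left₀ _ (Nat.cast_ne_zero.2 N.ne_zero)]
  rw [Etot, iSup_congr ergo_per_copy, ciSup_const]

end
end

section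
/- Additivity of local ergotropy for a bipartite noninteracting system: let ρ be a density matrix indexed by Fin d_A × Fin d_B, let h_A, h_B be Hermitian matrices of the corresponding sizes, and H_{AB} := h_A ⊗ I + I ⊗ h_B. Then the local ergotropy ⨆_{(U,V) ∈ U(d_A) × U(d_B)} (re Tr[ρ H_{AB}] − re Tr[(U⊗V) ρ (U⊗V)† H_{AB}]) equals ℰ(ρ_A; h_A) + ℰ(ρ_B; h_B), where ρ_A and ρ_B are the reduced density matrices (ρ_A) i j := Σ_b ρ (i,b) (j,b) and (ρ_B) a b := Σ_i ρ (i,a) (i,b). -/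
/-!
Cyclicity of the trace moves the conjugation by `U ⊗ V` onto the Hamiltonian, where unitarity gives
`(U ⊗ V)† (h_A ⊗ 1 + 1 ⊗ h_B) (U ⊗ V) = U† h_A U ⊗ 1 + 1 ⊗ V† h_B V`. A Hamiltonian of this form
sees only the marginals of `ρ`, because `Tr[ρ (X ⊗ 1)] = Tr[ρ_A X]` and `Tr[ρ (1 ⊗ Y)] = Tr[ρ_B Y]`.
The extracted work is therefore a function of `U` plus a function of `V`, and the supremum over
pairs splits, both functions being bounded since the unitary groups are compact.
-/

open Matrix Filter Topology
open scoped ComplexOrder Kronecker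

noncomputable section

section PartialTrace

variable {R m n : Type*}

/-- The partial trace over the second tensor factor: the reduced matrix `ρ_A` of `ρ` on `A ⊗ B`. -/
def traceRight [AddCommMonoid R] [Fintype n] (ρ : Matrix (m × n) (m × n) R) : Matrix m m R :=
  Matrix.of fun i j => ∑ b, ρ (i, b) (j, b)

/-- The partial trace over the first tensor factor: the reduced matrix `ρ_B` of `ρ` on `A ⊗ B`. -/
def traceLeft [AddCommMonoid R] [Fintype m] (ρ : Matrix (m × n) (m × n) R) : Matrix n n R :=
  Matrix.of fun a b => ∑ i, ρ (i, a) (i, b)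

/-- The Kronecker sum `X ⊗ 1 + 1 ⊗ Y`: the Hamiltonian of two noninteracting subsystems. -/
def kroneckerSum [NonAssocSemiring R] [DecidableEq m] [DecidableEq n]
    (X : Matrix m m R) (Y : Matrix n n R) : Matrix (m × n) (m × n) R :=
  X ⊗ₖ (1 : Matrix n n R) + (1 : Matrix m m R) ⊗ₖ Y

variable [Fintype m] [Fintype n]

lemma trace_mul_kronecker_one [NonAssocSemiring R] [DecidableEq n]
    (ρ : Matrix (m × n) (m × n) R) (X : Matrix m m R) :
    (ρ * (X ⊗ₖ (1 : Matrix n n R))).trace = (traceRight ρ * X).trace := by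
  simp only [traceRight, Matrix.trace, Matrix.diag_apply, Matrix.mul_apply,
    Fintype.sum_prod_type, Matrix.kroneckerMap_apply, Matrix.one_apply, Matrix.of_apply, mul_ite,
    mul_one, mul_zero, Finset.sum_ite_eq', Finset.mem_univ, if_true, Finset.sum_mul]
  exact Finset.sum_congr rfl fun _ _ => Finset.sum_comm

lemma trace_mul_one_kronecker [NonAssocSemiring R] [DecidableEq m]
    (ρ : Matrix (m × n) (m × n) R) (Y : Matrix n n R) :
    (ρ * ((1 : Matrix m m R) ⊗ₖ Y)).trace = (traceLeft ρ * Y).trace := by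
  simp only [traceLeft, Matrix.trace, Matrix.diag_apply, Matrix.mul_apply,
    Fintype.sum_prod_type_right, Matrix.kroneckerMap_apply, Matrix.one_apply, Matrix.of_apply,
    ite_mul, one_mul, zero_mul, mul_ite, mul_zero, Finset.sum_ite_eq', Finset.mem_univ, if_true,
    Finset.sum_mul]
  exact Finset.sum_congr rfl fun _ _ => Finset.sum_comm

lemma trace_mul_kroneckerSum [NonAssocSemiring R] [DecidableEq m] [DecidableEq n]
    (ρ : Matrix (m × n) (m × n) R) (X : Matrix m m R) (Y : Matrix n n R) :
    (ρ * kroneckerSum X Y).trace = (traceRight ρ * X).trace + (traceLeft ρ * Y).trace := by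
  rw [kroneckerSum, Matrix.mul_add, Matrix.trace_add, trace_mul_kronecker_one,
    trace_mul_one_kronecker]

lemma star_kronecker_mul_kroneckerSum_mul_kronecker [CommRing R] [StarRing R]
    [DecidableEq m] [DecidableEq n] {U : Matrix m m R} {V : Matrix n n R}
    (hU : U ∈ Matrix.unitaryGroup m R) (hV : V ∈ Matrix.unitaryGroup n R)
    (X : Matrix m m R) (Y : Matrix n n R) :
    star (U ⊗ₖ V) * kroneckerSum X Y * (U ⊗ₖ V)
      = kroneckerSum (star U * X * U) (star V * Y * V) := by
  have star_kronecker : star (U ⊗ₖ V) = star U ⊗ₖ star V := Matrix.conjTranspose_kronecker U V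
  simp only [kroneckerSum, star_kronecker, Matrix.mul_add, Matrix.add_mul,
    ← Matrix.mul_kronecker_mul, Matrix.mul_one, Matrix.mem_unitaryGroup_iff'.mp hU,
    Matrix.mem_unitaryGroup_iff'.mp hV]

end PartialTrace

lemma isCompact_unitaryGroup {n 𝕜 : Type*} [Fintype n] [DecidableEq n] [RCLike 𝕜] :
    IsCompact (Matrix.unitaryGroup n 𝕜 : Set (Matrix n n 𝕜)) := by
  have isCompact_entries_le_one :
      IsCompact (Set.univ.pi fun _ => Set.univ.pi fun _ => Metric.closedBall 0 1 :
        Set (Matrix n n 𝕜)) :=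
    isCompact_univ_pi fun _ => isCompact_univ_pi fun _ => isCompact_closedBall 0 1
  have isClosed_unitaryGroup : IsClosed (Matrix.unitaryGroup n 𝕜 : Set (Matrix n n 𝕜)) :=
    isClosed_unitary
  refine isCompact_entries_le_one.of_isClosed_subset isClosed_unitaryGroup fun U hU i _ j _ => ?_
  exact mem_closedBall_zero_iff.mpr (entry_norm_bound_of_unitary hU i j)

lemma ciSup_add_ciSup {α ι κ : Type*} [ConditionallyCompleteLattice α] [AddGroup α]
    [AddLeftMono α] [AddRightMono α] [Nonempty ι] [Nonempty κ] {f : ι → α} {g : κ → α}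
    (hf : BddAbove (Set.range f)) (hg : BddAbove (Set.range g)) :
    (⨆ i, f i) + ⨆ k, g k = ⨆ p : ι × κ, f p.1 + g p.2 := by
  have le_sum : ∀ p : ι × κ, f p.1 + g p.2 ≤ (⨆ i, f i) + ⨆ k, g k :=
    fun p => add_le_add (le_ciSup hf _) (le_ciSup hg _)
  have bddAbove_sum : BddAbove (Set.range fun p : ι × κ => f p.1 + g p.2) :=
    ⟨_, Set.forall_mem_range.2 le_sum⟩
  exact le_antisymm (ciSup_add_ciSup_le fun i k => le_ciSup bddAbove_sum (i, k)) (ciSup_le le_sum)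

section Ergotropy

variable {m n : Type*} [Fintype m] [Fintype n]

/-- The work `re Tr[ρH] − re Tr[U ρ U† H]` extracted from the state `ρ` by the evolution `U`, whose
supremum over unitaries is the ergotropy. -/
def extractedWork (ρ H U : Matrix n n ℂ) : ℝ :=
  (ρ * H).trace.re - (U * ρ * star U * H).trace.re

lemma extractedWork_eq_sub_trace_mul_conj (ρ H U : Matrix n n ℂ) :
    extractedWork ρ H U = (ρ * H).trace.re - (ρ * (star U * H * U)).trace.re := by
  rw [extractedWork, Matrix.mul_assoc (U * ρ), Matrix.trace_mul_cycle U,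
    Matrix.trace_mul_comm (star U * H * U)]

variable [DecidableEq m] [DecidableEq n]

lemma bddAbove_range_extractedWork (ρ H : Matrix n n ℂ) :
    BddAbove (Set.range fun U : Matrix.unitaryGroup n ℂ => extractedWork ρ H U) := by
  have continuous_extractedWork : Continuous (extractedWork ρ H) := by
    have continuous_trace_conj : Continuous fun U => (U * ρ * star U * H).trace :=
      (((continuous_id.mul continuous_const).mul continuous_star).mul
        continuous_const).matrix_trace
    exact continuous_const.sub (Complex.continuous_re.comp continuous_trace_conj)
  exact (isCompact_unitaryGroup.bddAbove_image continuous_extractedWork.continuousOn).mono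
    (Set.range_subset_iff.mpr fun U => Set.mem_image_of_mem _ U.2)

lemma extractedWork_kroneckerSum (ρ : Matrix (m × n) (m × n) ℂ)
    (hA : Matrix m m ℂ) (hB : Matrix n n ℂ)
    (U : Matrix.unitaryGroup m ℂ) (V : Matrix.unitaryGroup n ℂ) :
    extractedWork ρ (kroneckerSum hA hB) ((U : Matrix m m ℂ) ⊗ₖ (V : Matrix n n ℂ))
      = extractedWork (traceRight ρ) hA U + extractedWork (traceLeft ρ) hB V := by
  simp only [extractedWork_eq_sub_trace_mul_conj,
    star_kronecker_mul_kroneckerSum_mul_kronecker U.2 V.2, trace_mul_kroneckerSum, Complex.add_re]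
  ring

/-- The local ergotropy of a bipartite state: the work extractable by product unitaries `U ⊗ V`. -/
def localErgo (ρ H : Matrix (m × n) (m × n) ℂ) : ℝ :=
  ⨆ UV : Matrix.unitaryGroup m ℂ × Matrix.unitaryGroup n ℂ,
    extractedWork ρ H ((UV.1 : Matrix m m ℂ) ⊗ₖ (UV.2 : Matrix n n ℂ))

theorem statement7_general (ρ : Matrix (m × n) (m × n) ℂ)
    (hA : Matrix m m ℂ) (hB : Matrix n n ℂ) :
    localErgo ρ (kroneckerSum hA hB) = ergo (traceRight ρ) hA + ergo (traceLeft ρ) hB :=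
  calc localErgo ρ (kroneckerSum hA hB)
    _ = ⨆ UV : Matrix.unitaryGroup m ℂ × Matrix.unitaryGroup n ℂ,
          (extractedWork (traceRight ρ) hA UV.1 + extractedWork (traceLeft ρ) hB UV.2) :=
        iSup_congr fun UV => extractedWork_kroneckerSum ρ hA hB UV.1 UV.2
    _ = ergo (traceRight ρ) hA + ergo (traceLeft ρ) hB :=
        (ciSup_add_ciSup (bddAbove_range_extractedWork _ _)
          (bddAbove_range_extractedWork _ _)).symm

end Ergotropy

theorem statement7 {dA dB : ℕ} (ρ : Matrix (Fin dA × Fin dB) (Fin dA × Fin dB) ℂ)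
    (hρ : IsDensity ρ)
    (hA : Matrix (Fin dA) (Fin dA) ℂ) (hB : Matrix (Fin dB) (Fin dB) ℂ)
    (hhA : hA.IsHermitian) (hhB : hB.IsHermitian) :
    (⨆ UV : Matrix.unitaryGroup (Fin dA) ℂ × Matrix.unitaryGroup (Fin dB) ℂ,
      ((ρ * (hA ⊗ₖ (1 : Matrix (Fin dB) (Fin dB) ℂ)
          + (1 : Matrix (Fin dA) (Fin dA) ℂ) ⊗ₖ hB)).trace.re -
        (((UV.1 : Matrix (Fin dA) (Fin dA) ℂ) ⊗ₖ (UV.2 : Matrix (Fin dB) (Fin dB) ℂ)) * ρ *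
          star ((UV.1 : Matrix (Fin dA) (Fin dA) ℂ) ⊗ₖ (UV.2 : Matrix (Fin dB) (Fin dB) ℂ)) *
          (hA ⊗ₖ (1 : Matrix (Fin dB) (Fin dB) ℂ)
            + (1 : Matrix (Fin dA) (Fin dA) ℂ) ⊗ₖ hB)).trace.re))
    = ergo (Matrix.of fun i j => ∑ b, ρ (i, b) (j, b)) hA
      + ergo (Matrix.of fun a b => ∑ i, ρ (i, a) (i, b)) hB :=
  statement7_general ρ hA hB

end
end
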